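/- Unilateral Liouville property: let M_a be of class 𝒜̄ and write â_j = (a_1+…+a_n) − a_j. (i) If a_1 = â_1 and u is an upper semicontinuous viscosity subsolution of M_a(D²u) = 0 in ℝⁿ∖{0} which is bounded above, then u is constant. (ii) If a_1 > â_1 and u is an upper semicontinuous viscosity subsolution of M_a(D²u) = 0 in all of ℝⁿ which is bounded above, then u is constant. (iii) If a_n = â_n and v is a lower semicontinuous viscosity supersolution of M_a(D²v) = 0 in ℝⁿ∖{0} which is bounded below, then v is constant. (iv) If a_n > â_n and v is a lower semicontinuous viscosity supersolution of M_a(D²v) = 0 in all of ℝⁿ which is bounded below, then v is constant. -/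

import Mathlib

open Set Metric MeasureTheory Filter

noncomputable section

/-- Euclidean `n`-space `ℝⁿ`. -/
abbrev En (n : ℕ) : Type := EuclideanSpace ℝ (Fin n)

/-- The eigenvalues of a (symmetric) matrix, arranged in nondecreasing order. -/
noncomputable def sortedEig {n : ℕ} (X : Matrix (Fin n) (Fin n) ℝ) : Fin n → ℝ :=
  if hX : X.IsHermitian then fun i => hX.eigenvalues (Tuple.sort hX.eigenvalues i) else 0

/-- The weighted partial trace operator `M_a(X) = Σ a_i λ_i(X)`. -/
noncomputable def Ma {n : ℕ} (a : Fin n → ℝ) (X : Matrix (Fin n) (Fin n) ℝ) : ℝ :=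
  ∑ i, a i * sortedEig X i

/-- The last index of `Fin n`. -/
def lastIdx (n : ℕ) [NeZero n] : Fin n :=
  ⟨n - 1, Nat.sub_lt (Nat.pos_of_ne_zero (NeZero.ne n)) Nat.one_pos⟩

/-- The class 𝒜̄ : all weights nonnegative, some weight positive. -/
def ClassAbar {n : ℕ} (a : Fin n → ℝ) : Prop := (∀ i, 0 ≤ a i) ∧ ∃ i, 0 < a i

/-- The class 𝒜 : nonnegative weights with `a 1 > 0` and `a n > 0`. -/
def ClassA {n : ℕ} [NeZero n] (a : Fin n → ℝ) : Prop :=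
  (∀ i, 0 ≤ a i) ∧ 0 < a 0 ∧ 0 < a (lastIdx n)

/-- The class 𝒜₁ : nonnegative weights with `a 1 > 0`. -/
def ClassA1 {n : ℕ} [NeZero n] (a : Fin n → ℝ) : Prop := (∀ i, 0 ≤ a i) ∧ 0 < a 0

/-- The class 𝒜ₙ : nonnegative weights with `a n > 0`. -/
def ClassAn {n : ℕ} [NeZero n] (a : Fin n → ℝ) : Prop :=
  (∀ i, 0 ≤ a i) ∧ 0 < a (lastIdx n)

/-- `a* = min (a 1) (a n)`. -/
noncomputable def aStar {n : ℕ} [NeZero n] (a : Fin n → ℝ) : ℝ := min (a 0) (a (lastIdx n))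

/-- `â_j = (a 1 + ⋯ + a n) - a j`. -/
noncomputable def hatA {n : ℕ} (a : Fin n → ℝ) (j : Fin n) : ℝ := (∑ i, a i) - a j

/-- The Hessian matrix of `φ` at `x`. -/
noncomputable def hess {n : ℕ} (φ : En n → ℝ) (x : En n) : Matrix (Fin n) (Fin n) ℝ :=
  fun i j => iteratedFDeriv ℝ 2 φ x ![EuclideanSpace.single i 1, EuclideanSpace.single j 1]

/-- The Hessian matrix of `φ` at `x`, with derivatives taken within `Ω`. -/
noncomputable def hessOn {n : ℕ} (Ω : Set (En n)) (φ : En n → ℝ) (x : En n) :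
    Matrix (Fin n) (Fin n) ℝ :=
  fun i j =>
    iteratedFDerivWithin ℝ 2 φ Ω x ![EuclideanSpace.single i 1, EuclideanSpace.single j 1]

/-- `u` is a viscosity subsolution of `M_a(D²u) = f` in `Ω`. -/
def IsViscSubsol {n : ℕ} (a : Fin n → ℝ) (Ω : Set (En n)) (f u : En n → ℝ) : Prop :=
  ∀ x₀ ∈ Ω, ∀ φ : En n → ℝ, ContDiff ℝ 2 φ →
    IsLocalMaxOn (fun x => u x - φ x) Ω x₀ → f x₀ ≤ Ma a (hess φ x₀)

/-- `u` is a viscosity supersolution of `M_a(D²u) = f` in `Ω`. -/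
def IsViscSupersol {n : ℕ} (a : Fin n → ℝ) (Ω : Set (En n)) (f u : En n → ℝ) : Prop :=
  ∀ x₀ ∈ Ω, ∀ φ : En n → ℝ, ContDiff ℝ 2 φ →
    IsLocalMinOn (fun x => u x - φ x) Ω x₀ → Ma a (hess φ x₀) ≤ f x₀

/-- `u` is a (continuous) viscosity solution of `M_a(D²u) = f` in `Ω`. -/
def IsViscSolution {n : ℕ} (a : Fin n → ℝ) (Ω : Set (En n)) (f u : En n → ℝ) : Prop :=
  ContinuousOn u Ω ∧ IsViscSubsol a Ω f u ∧ IsViscSupersol a Ω f u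

/-- The `L^p` norm of `f` on `D`. -/
noncomputable def lpNormOn {n : ℕ} (p : ℝ) (D : Set (En n)) (f : En n → ℝ) : ℝ :=
  (∫ x in D, |f x| ^ p) ^ (1 / p)

/-- The sup norm of `f` on `D`. -/
noncomputable def supAbsOn {n : ℕ} (D : Set (En n)) (f : En n → ℝ) : ℝ :=
  sSup ((fun x => |f x|) '' D)

/-- The Hölder seminorm `[h]_{β,D}`. -/
noncomputable def holderSemi {n : ℕ} (β : ℝ) (D : Set (En n)) (h : En n → ℝ) : ℝ :=
  sSup {r | ∃ x ∈ D, ∃ y ∈ D, x ≠ y ∧ r = |h x - h y| / ‖x - y‖ ^ β}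

/-- The Hölder norm `‖g‖_{C^β(D)} = sup_D |g| + [g]_{β,D}`. -/
noncomputable def cBetaNorm {n : ℕ} (β : ℝ) (D : Set (En n)) (g : En n → ℝ) : ℝ :=
  supAbsOn D g + holderSemi β D g

/-- `g` is `β`-Hölder continuous on `D`. -/
def HolderOn {n : ℕ} (β : ℝ) (D : Set (En n)) (g : En n → ℝ) : Prop :=
  ∃ K : ℝ, ∀ x ∈ D, ∀ y ∈ D, |g x - g y| ≤ K * ‖x - y‖ ^ β

/-- The `C^{1,β}(D)` norm: `sup|g| + sup|Dg| + [Dg]_{β,D}`. -/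
noncomputable def c1BetaNorm {n : ℕ} (β : ℝ) (D : Set (En n)) (g : En n → ℝ) : ℝ :=
  supAbsOn D g + sSup ((fun x => ‖fderiv ℝ g x‖) '' D) +
    sSup {r | ∃ x ∈ D, ∃ y ∈ D, x ≠ y ∧ r = ‖fderiv ℝ g x - fderiv ℝ g y‖ / ‖x - y‖ ^ β}

/-- `g ∈ C^{1,β}(D)`: differentiable with `β`-Hölder derivative on `D`. -/
def C1HolderOn {n : ℕ} (β : ℝ) (D : Set (En n)) (g : En n → ℝ) : Prop :=
  ContDiff ℝ 1 g ∧ ∃ K : ℝ, ∀ x ∈ D, ∀ y ∈ D,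
    ‖fderiv ℝ g x - fderiv ℝ g y‖ ≤ K * ‖x - y‖ ^ β

/-- Uniform exterior sphere condition with radius `R`: every boundary point lies on the
boundary of a closed ball of radius `R` containing `Ω̄`. -/
def ExtSphere {n : ℕ} (Ω : Set (En n)) (R : ℝ) : Prop :=
  ∀ y ∈ frontier Ω, ∃ z : En n, dist y z = R ∧ closure Ω ⊆ closedBall z R

/-- The cone `Σ_θ = {x : xₙ ≥ |x| cos θ}`. -/
def coneSet (n : ℕ) [NeZero n] (θ : ℝ) : Set (En n) := {x | ‖x‖ * Real.cos θ ≤ x (lastIdx n)}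

/-- Uniform exterior cone condition. -/
def ExtCone {n : ℕ} [NeZero n] (Ω : Set (En n)) : Prop :=
  ∃ θ₀ ∈ Set.Ioo (0 : ℝ) Real.pi, ∃ r₀ > (0 : ℝ), ∀ y ∈ frontier Ω,
    ∃ O : En n ≃ₗᵢ[ℝ] En n,
      closure Ω ∩ ball y r₀ ⊆ (fun x => y + O x) '' coneSet n θ₀

/-- Uniform Lipschitz boundary with Lipschitz constant `L`: near each boundary point, in
suitable rotated coordinates, `Ω` is the region above the graph of an `L`-Lipschitz
function. -/
def LipschitzBoundary {n : ℕ} [NeZero n] (Ω : Set (En n)) (L : ℝ) : Prop :=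
  ∃ r₀ > (0 : ℝ), ∀ y ∈ frontier Ω, ∃ O : En n ≃ₗᵢ[ℝ] En n, ∃ ψ : En n → ℝ,
    LipschitzWith (Real.toNNReal L) ψ ∧
    ∀ x ∈ ball (0 : En n) r₀,
      (y + O x ∈ Ω ↔ ψ (x - EuclideanSpace.single (lastIdx n) (x (lastIdx n))) < x (lastIdx n))

/-- The open cube of edge `ℓ` centered at the origin. -/
def cube (n : ℕ) (ℓ : ℝ) : Set (En n) := {x | ∀ i, |x i| < ℓ / 2}

/-- The upper concave envelope of `u` in `Ω`: the smallest concave function `≥ u` in `Ω`. -/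
noncomputable def upperEnvelope {n : ℕ} (Ω : Set (En n)) (u : En n → ℝ) : En n → ℝ :=
  fun x => sInf {t | ∃ φ : En n → ℝ, ConcaveOn ℝ Ω φ ∧ (∀ z ∈ Ω, u z ≤ φ z) ∧ t = φ x}

/-- The lower convex envelope of `u` in `Ω`: the largest convex function `≤ u` in `Ω`. -/
noncomputable def lowerEnvelope {n : ℕ} (Ω : Set (En n)) (u : En n → ℝ) : En n → ℝ :=
  fun x => sSup {t | ∃ φ : En n → ℝ, ConvexOn ℝ Ω φ ∧ (∀ z ∈ Ω, φ z ≤ u z) ∧ t = φ x}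

end


lemma quad_eq_sum {n : ℕ} {X : Matrix (Fin n) (Fin n) ℝ} (hX : X.IsHermitian) (y : En n) :
    inner ℝ y (Matrix.toEuclideanLin X y) =
      ∑ i, hX.eigenvalues i * (inner ℝ (hX.eigenvectorBasis i) y) ^ 2 := by
  rw [← hX.eigenvectorBasis.sum_inner_mul_inner]
  refine Finset.sum_congr rfl fun i _ => ?_
  have hs := (Matrix.isSymmetric_toEuclideanLin_iff.mpr hX) (hX.eigenvectorBasis i) y
  have he : Matrix.toEuclideanLin X (hX.eigenvectorBasis i) =
      hX.eigenvalues i • hX.eigenvectorBasis i := by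
    ext j
    have := congrFun (hX.mulVec_eigenvectorBasis i) j
    simpa [Matrix.toLpLin_apply] using this
  rw [← hs, he, inner_smul_left, real_inner_comm]
  simp
  ring

lemma norm_sq_eq_sum {n : ℕ} {X : Matrix (Fin n) (Fin n) ℝ} (hX : X.IsHermitian) (y : En n) :
    ‖y‖ ^ 2 = ∑ i, (inner ℝ (hX.eigenvectorBasis i) y) ^ 2 := by
  have := hX.eigenvectorBasis.sum_sq_norm_inner_right y
  rw [← this]
  simp

lemma quad_eigvec {n : ℕ} {X : Matrix (Fin n) (Fin n) ℝ} (hX : X.IsHermitian) (i : Fin n) :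
    inner ℝ (hX.eigenvectorBasis i) (Matrix.toEuclideanLin X (hX.eigenvectorBasis i)) =
      hX.eigenvalues i := by
  rw [quad_eq_sum hX, Finset.sum_eq_single i]
  · simp
  · intro j _ hj
    simp [hX.eigenvectorBasis.inner_eq_ite, hj]
  · simp

lemma sortedEig_le {n : ℕ} {X : Matrix (Fin n) (Fin n) ℝ} (hX : X.IsHermitian) {β : ℝ}
    (h : ∀ y : En n, inner ℝ y (Matrix.toEuclideanLin X y) ≤ β * ‖y‖ ^ 2) (i : Fin n) :
    sortedEig X i ≤ β := by
  unfold sortedEig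
  rw [dif_pos hX]
  have := h (hX.eigenvectorBasis (Tuple.sort hX.eigenvalues i))
  rw [quad_eigvec] at this
  simpa using this

lemma le_sortedEig {n : ℕ} {X : Matrix (Fin n) (Fin n) ℝ} (hX : X.IsHermitian) {β : ℝ}
    (h : ∀ y : En n, β * ‖y‖ ^ 2 ≤ inner ℝ y (Matrix.toEuclideanLin X y)) (i : Fin n) :
    β ≤ sortedEig X i := by
  unfold sortedEig
  rw [dif_pos hX]
  have := h (hX.eigenvectorBasis (Tuple.sort hX.eigenvalues i))
  rw [quad_eigvec] at this
  simpa using this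

lemma sortedEig_zero_le {n : ℕ} [NeZero n] {X : Matrix (Fin n) (Fin n) ℝ} (hX : X.IsHermitian)
    {w : En n} (hw : ‖w‖ = 1) :
    sortedEig X 0 ≤ inner ℝ w (Matrix.toEuclideanLin X w) := by
  have hmin : ∀ j, sortedEig X 0 ≤ hX.eigenvalues j := by
    intro j
    unfold sortedEig
    rw [dif_pos hX]
    have := Tuple.monotone_sort hX.eigenvalues
      (show (0 : Fin n) ≤ (Tuple.sort hX.eigenvalues).symm j from by rw [Fin.le_def]; simp)
    simpa using this
  have h1 := norm_sq_eq_sum hX w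
  rw [hw] at h1
  calc sortedEig X 0 = sortedEig X 0 * 1 ^ 2 := by ring
    _ = ∑ i, sortedEig X 0 * (inner ℝ (hX.eigenvectorBasis i) w) ^ 2 := by
        rw [h1, Finset.mul_sum]
    _ ≤ _ := by
        rw [quad_eq_sum hX]
        exact Finset.sum_le_sum fun i _ => mul_le_mul_of_nonneg_right (hmin i) (sq_nonneg _)

lemma le_sortedEig_last {n : ℕ} [NeZero n] {X : Matrix (Fin n) (Fin n) ℝ} (hX : X.IsHermitian)
    {w : En n} (hw : ‖w‖ = 1) :
    inner ℝ w (Matrix.toEuclideanLin X w) ≤ sortedEig X (lastIdx n) := by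
  have hmax : ∀ j, hX.eigenvalues j ≤ sortedEig X (lastIdx n) := by
    intro j
    unfold sortedEig
    rw [dif_pos hX]
    have := Tuple.monotone_sort hX.eigenvalues
      (show (Tuple.sort hX.eigenvalues).symm j ≤ lastIdx n from by
        rw [Fin.le_def]; simp only [lastIdx]; have := ((Tuple.sort hX.eigenvalues).symm j).2; omega)
    simpa using this
  have h1 := norm_sq_eq_sum hX w
  rw [hw] at h1
  calc _ ≤ ∑ i, sortedEig X (lastIdx n) * (inner ℝ (hX.eigenvectorBasis i) w) ^ 2 := by
        rw [quad_eq_sum hX]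
        exact Finset.sum_le_sum fun i _ => mul_le_mul_of_nonneg_right (hmax i) (sq_nonneg _)
    _ = sortedEig X (lastIdx n) * 1 ^ 2 := by rw [h1, Finset.mul_sum]
    _ = _ := by ring

lemma weighted_le {n : ℕ} {a l : Fin n → ℝ} (ha : ∀ i, 0 ≤ a i) (k : Fin n) {α β : ℝ}
    (h0 : l k ≤ α) (h : ∀ i, l i ≤ β) : ∑ i, a i * l i ≤ a k * α + hatA a k * β := by
  unfold hatA
  have e1 := Finset.add_sum_erase Finset.univ (fun i => a i * l i) (Finset.mem_univ k)
  have e2 := Finset.add_sum_erase Finset.univ a (Finset.mem_univ k)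
  have e3 : ∑ i ∈ Finset.univ.erase k, a i * l i ≤ ∑ i ∈ Finset.univ.erase k, a i * β :=
    Finset.sum_le_sum fun i _ => mul_le_mul_of_nonneg_left (h i) (ha i)
  rw [← Finset.sum_mul] at e3
  have e4 := mul_le_mul_of_nonneg_left h0 (ha k)
  rw [← e1, ← e2]
  simp only [add_sub_cancel_left]
  linarith

lemma hess_herm {n : ℕ} {φ : En n → ℝ} (hφ : ContDiff ℝ 2 φ) (x : En n) :
    (hess φ x).IsHermitian := by
  have hs : IsSymmSndFDerivAt ℝ φ x := hφ.contDiffAt.isSymmSndFDerivAt (by simp)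
  ext i j
  simp [hess, iteratedFDeriv_two_apply]
  exact hs _ _

lemma hess_quad {n : ℕ} (φ : En n → ℝ) (x y : En n) :
    inner ℝ y (Matrix.toEuclideanLin (hess φ x) y) = fderiv ℝ (fderiv ℝ φ) x y y := by
  have hy : y = ∑ i, y i • EuclideanSpace.single i (1 : ℝ) := by
    ext j
    simp [Finset.sum_apply, Pi.single_apply]
  have : fderiv ℝ (fderiv ℝ φ) x y y = ∑ i, ∑ j, y i * (y j * hess φ x i j) := by
    conv_lhs => rw [hy]
    simp [hess, iteratedFDeriv_two_apply, map_sum, Finset.mul_sum]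
    rw [Finset.sum_comm]
    refine Finset.sum_congr rfl fun i _ => Finset.sum_congr rfl fun j _ => by ring
  rw [this]
  simp [PiLp.inner_apply, Matrix.toLpLin_apply, Matrix.mulVec, dotProduct,
    Finset.sum_mul]
  refine Finset.sum_congr rfl fun i _ => Finset.sum_congr rfl fun j _ => by ring

/-- The weak form of being a subsolution that is used in the proof. -/
def WeakSub {n : ℕ} (A B : ℝ) (Ω : Set (En n)) (u : En n → ℝ) : Prop :=
  ∀ x₀ ∈ Ω, ∀ φ : En n → ℝ, ContDiff ℝ 2 φ → IsLocalMaxOn (fun x => u x - φ x) Ω x₀ →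
    ∀ (α β : ℝ) (w : En n), ‖w‖ = 1 →
      (∀ y : En n, fderiv ℝ (fderiv ℝ φ) x₀ y y ≤ β * ‖y‖ ^ 2) →
      fderiv ℝ (fderiv ℝ φ) x₀ w w ≤ α → 0 ≤ A * α + B * β

lemma weakSub_of_sub {n : ℕ} [NeZero n] {a : Fin n → ℝ} (ha : ∀ i, 0 ≤ a i) {Ω : Set (En n)}
    {u : En n → ℝ} (h : IsViscSubsol a Ω (fun _ => 0) u) : WeakSub (a 0) (hatA a 0) Ω u := by
  intro x₀ hx₀ φ hφ hmax α β w hw hβ hα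
  have hH := hess_herm hφ x₀
  refine (h x₀ hx₀ φ hφ hmax).trans (weighted_le ha 0 ?_ ?_)
  · exact (sortedEig_zero_le hH hw).trans (by rwa [hess_quad])
  · exact sortedEig_le hH (fun y => by rw [hess_quad]; exact hβ y)

lemma weakSub_of_super {n : ℕ} [NeZero n] {a : Fin n → ℝ} (ha : ∀ i, 0 ≤ a i) {Ω : Set (En n)}
    {v : En n → ℝ} (h : IsViscSupersol a Ω (fun _ => 0) v) :
    WeakSub (a (lastIdx n)) (hatA a (lastIdx n)) Ω (fun x => - v x) := by
  intro x₀ hx₀ φ hφ hmax α β w hw hβ hα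
  have hH := hess_herm hφ.neg x₀
  have e : ∀ y, fderiv ℝ (fderiv ℝ (fun x => - φ x)) x₀ y y = - fderiv ℝ (fderiv ℝ φ) x₀ y y := by
    intro y
    have : fderiv ℝ (fun x => - φ x) = fun x => - fderiv ℝ φ x := by
      ext1 x; exact fderiv_fun_neg
    rw [this, fderiv_fun_neg]
    rfl
  have hm : IsLocalMinOn (fun x => v x - (- φ x)) Ω x₀ := by
    have := hmax.neg
    refine this.congr ?_ ?_
    all_goals first | exact hx₀ | exact Filter.Eventually.of_forall fun x => by simp; ring
  have h1 := h x₀ hx₀ (fun x => - φ x) hφ.neg hm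
  have h2 := weighted_le (l := fun i => - sortedEig (hess (fun x => - φ x) x₀) i) ha (lastIdx n)
    (α := α) (β := β) ?_ ?_
  · simp only [mul_neg, Finset.sum_neg_distrib] at h2
    unfold Ma at h1
    linarith
  · have := le_sortedEig_last hH hw
    rw [hess_quad, e] at this
    linarith
  · intro i
    have := le_sortedEig hH (β := -β) (fun y => by rw [hess_quad, e]; linarith [hβ y]) i
    linarith

/-- Radial quadratic test function. -/
noncomputable def radTest {n : ℕ} (p q s₀ : ℝ) (z x : En n) : ℝ :=
  p * (‖x - z‖ ^ 2 - s₀) + q / 2 * (‖x - z‖ ^ 2 - s₀) ^ 2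

lemma radTest_contDiff {n : ℕ} (p q s₀ : ℝ) (z : En n) :
    ContDiff ℝ 2 (radTest p q s₀ z) := by
  unfold radTest
  have h : ContDiff ℝ 2 (fun x : En n => ‖x - z‖ ^ 2) :=
    (contDiff_id.sub contDiff_const).norm_sq ℝ
  fun_prop

lemma hasFDerivAt_S {n : ℕ} (z x : En n) :
    HasFDerivAt (fun x : En n => ‖x - z‖ ^ 2) ((2 : ℝ) • innerSL ℝ (x - z)) x := by
  have := ((hasFDerivAt_id x).sub_const z).norm_sq
  refine HasFDerivAt.congr_fderiv (f := fun x : En n => ‖x - z‖ ^ 2) this ?_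
  ext y
  simp

lemma radTest_fderiv {n : ℕ} (p q s₀ : ℝ) (z x : En n) :
    fderiv ℝ (radTest p q s₀ z) x =
      (2 * (p + q * (‖x - z‖ ^ 2 - s₀))) • innerSL ℝ (x - z) := by
  have h := (hasFDerivAt_S z x).sub_const s₀
  have := (h.const_mul p).add ((h.pow 2).const_mul (q / 2))
  have h2 : HasFDerivAt (radTest p q s₀ z) _ x := this
  rw [h2.fderiv]
  ext y
  simp
  ring

lemma radTest_fderiv2 {n : ℕ} (p q : ℝ) (z x y : En n) :
    fderiv ℝ (fderiv ℝ (radTest p q (‖x - z‖ ^ 2) z)) x y y =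
      2 * p * ‖y‖ ^ 2 + 4 * q * (inner ℝ (x - z) y) ^ 2 := by
  have e : fderiv ℝ (radTest p q (‖x - z‖ ^ 2) z) = fun x' =>
      (2 * (p + q * (‖x' - z‖ ^ 2 - ‖x - z‖ ^ 2))) • innerSL ℝ (x' - z) :=
    funext fun x' => radTest_fderiv _ _ _ _ _
  have h1 := ((((hasFDerivAt_S z x).sub_const (‖x - z‖ ^ 2)).const_mul q).const_add p).const_mul 2
  have h2 : HasFDerivAt (fun x' : En n => innerSL ℝ (x' - z)) (innerSL ℝ) x := by
    have := (innerSL ℝ (E := En n)).hasFDerivAt.comp x ((hasFDerivAt_id x).sub_const z)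
    exact this
  have h3 := h1.fun_smul h2
  rw [e, h3.fderiv]
  have h4 : (innerSL ℝ y) y = ‖y‖ ^ 2 := real_inner_self_eq_norm_sq y
  simp only [sub_self, mul_zero, add_zero, ContinuousLinearMap.add_apply,
    ContinuousLinearMap.smul_apply, ContinuousLinearMap.smulRight_apply, h4, smul_eq_mul,
    innerSL_apply_apply]
  ring

lemma taylor_touch {g g' : ℝ → ℝ} {s₀ q η : ℝ} (hη : 0 < η)
    (hg : ∀ᶠ s in nhds s₀, HasDerivAt g (g' s) s) (hg' : HasDerivAt g' q s₀) :
    ∀ᶠ s in nhds s₀, g s ≤ g s₀ + g' s₀ * (s - s₀) + (q + η) / 2 * (s - s₀) ^ 2 := by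
  set h : ℝ → ℝ := fun s => g s - (g' s₀ * (s - s₀) + (q + η) / 2 * (s - s₀) ^ 2) with hh
  have hd : ∀ᶠ s in nhds s₀, HasDerivAt h (g' s - (g' s₀ + (q + η) * (s - s₀))) s := by
    filter_upwards [hg] with s hs
    have h0 := (hasDerivAt_id s).sub_const s₀
    have h1 := hs.sub ((h0.const_mul (g' s₀)).add ((h0.pow 2).const_mul ((q + η) / 2)))
    refine h1.congr_deriv ?_
    simp
    ring
  have hde : deriv h =ᶠ[nhds s₀] fun s => g' s - (g' s₀ + (q + η) * (s - s₀)) := by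
    filter_upwards [hd] with s hs using hs.deriv
  have hm : IsLocalMax h s₀ := by
    apply isLocalMax_of_deriv_deriv_neg
    · rw [hde.deriv_eq]
      have h0 := (hasDerivAt_id s₀).sub_const s₀
      have h1 := hg'.sub ((h0.const_mul (q + η)).const_add (g' s₀))
      have h2 := h1.deriv
      simp only [id] at h2
      change deriv (fun s => g' s - (g' s₀ + (q + η) * (s - s₀))) s₀ = _ at h2
      rw [h2]
      linarith
    · rw [hd.self_of_nhds.deriv]; simp
    · exact hd.self_of_nhds.continuousAt
  filter_upwards [hm] with s hs
  simp [hh] at hs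
  linarith

lemma weakSub_radial {n : ℕ} {A B : ℝ} {Ω : Set (En n)} {u : En n → ℝ} (hu : WeakSub A B Ω u)
    {x₀ z : En n} (hx₀ : x₀ ∈ Ω) {g g' : ℝ → ℝ} {q η : ℝ} (hη : 0 < η)
    (hg : ∀ᶠ s in nhds (‖x₀ - z‖ ^ 2), HasDerivAt g (g' s) s)
    (hg' : HasDerivAt g' q (‖x₀ - z‖ ^ 2))
    (hmax : IsLocalMaxOn (fun x => u x - g (‖x - z‖ ^ 2)) Ω x₀)
    (α β : ℝ) (w : En n) (hw : ‖w‖ = 1)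
    (hβ : ∀ y : En n, 2 * g' (‖x₀ - z‖ ^ 2) * ‖y‖ ^ 2 + 4 * (q + η) * (inner ℝ (x₀ - z) y) ^ 2
      ≤ β * ‖y‖ ^ 2)
    (hα : 2 * g' (‖x₀ - z‖ ^ 2) + 4 * (q + η) * (inner ℝ (x₀ - z) w) ^ 2 ≤ α) :
    0 ≤ A * α + B * β := by
  refine hu x₀ hx₀ (radTest (g' (‖x₀ - z‖ ^ 2)) (q + η) (‖x₀ - z‖ ^ 2) z)
    (radTest_contDiff _ _ _ _) ?_ α β w hw ?_ ?_
  · have hc : Tendsto (fun x : En n => ‖x - z‖ ^ 2) (nhdsWithin x₀ Ω) (nhds (‖x₀ - z‖ ^ 2)) :=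
      (hasFDerivAt_S z x₀).continuousAt.tendsto.mono_left nhdsWithin_le_nhds
    have := hc.eventually (taylor_touch hη hg hg')
    unfold IsLocalMaxOn IsMaxFilter at *
    filter_upwards [this, hmax] with x h1 h2
    simp only [radTest]
    simp only [sub_self]
    nlinarith
  · intro y; rw [radTest_fderiv2]; exact hβ y
  · rw [radTest_fderiv2, hw]; linarith

lemma le_of_small {c k η₀ : ℝ} (hη₀ : 0 < η₀) (h : ∀ η, 0 < η → η < η₀ → 0 ≤ c + k * η) :
    0 ≤ c := by
  have ht : Tendsto (fun η : ℝ => c + k * η) (nhdsWithin 0 (Ioi 0)) (nhds (c + k * 0)) :=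
    (Continuous.tendsto (by fun_prop) 0).mono_left nhdsWithin_le_nhds
  rw [mul_zero, add_zero] at ht
  refine ge_of_tendsto ht ?_
  filter_upwards [Ioo_mem_nhdsGT hη₀] with η hη using h η hη.1 hη.2

lemma weakSub_concave {n : ℕ} {A B : ℝ} {Ω : Set (En n)} {u : En n → ℝ} (hu : WeakSub A B Ω u)
    {x₀ z : En n} (hx₀ : x₀ ∈ Ω) (hz : x₀ ≠ z) {g g' : ℝ → ℝ} {q : ℝ} (hq : q < 0)
    (hg : ∀ᶠ s in nhds (‖x₀ - z‖ ^ 2), HasDerivAt g (g' s) s)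
    (hg' : HasDerivAt g' q (‖x₀ - z‖ ^ 2))
    (hmax : IsLocalMaxOn (fun x => u x - g (‖x - z‖ ^ 2)) Ω x₀) :
    0 ≤ A * (2 * g' (‖x₀ - z‖ ^ 2) + 4 * q * ‖x₀ - z‖ ^ 2) + B * (2 * g' (‖x₀ - z‖ ^ 2)) := by
  have hv : 0 < ‖x₀ - z‖ := norm_pos_iff.mpr (sub_ne_zero.mpr hz)
  apply le_of_small (k := A * (4 * ‖x₀ - z‖ ^ 2)) (neg_pos.mpr hq)
  intro η h0 h1
  have := weakSub_radial hu hx₀ h0 hg hg' hmax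
    (2 * g' (‖x₀ - z‖ ^ 2) + 4 * (q + η) * ‖x₀ - z‖ ^ 2) (2 * g' (‖x₀ - z‖ ^ 2))
    (‖x₀ - z‖⁻¹ • (x₀ - z)) (by rw [norm_smul, norm_inv, norm_norm]; field_simp) ?_ ?_
  · linarith
  · intro y
    have : 0 ≤ (-(q + η)) * (inner ℝ (x₀ - z) y) ^ 2 := mul_nonneg (by linarith) (sq_nonneg _)
    linarith
  · rw [inner_smul_right, real_inner_self_eq_norm_sq]
    apply le_of_eq
    field_simp

lemma exists_perp {n : ℕ} (hn : 2 ≤ n) (v : En n) : ∃ w : En n, ‖w‖ = 1 ∧ inner ℝ v w = 0 := by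
  have hne : (ℝ ∙ v)ᗮ ≠ ⊥ := by
    intro h
    rw [Submodule.orthogonal_eq_bot_iff] at h
    have h1 := finrank_span_le_card (R := ℝ) ({v} : Set (En n))
    rw [Set.toFinset_singleton, Finset.card_singleton] at h1
    rw [h, finrank_top, finrank_euclideanSpace, Fintype.card_fin] at h1
    omega
  obtain ⟨w, hw, hw0⟩ := Submodule.exists_mem_ne_zero_of_ne_bot hne
  have hp : 0 < ‖w‖ := norm_pos_iff.mpr hw0
  refine ⟨‖w‖⁻¹ • w, by rw [norm_smul, norm_inv, norm_norm]; field_simp, ?_⟩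
  rw [inner_smul_right, Submodule.mem_orthogonal_singleton_iff_inner_right.mp hw, mul_zero]

lemma weakSub_log {n : ℕ} (hn : 2 ≤ n) {A : ℝ} (hA : 0 < A) {Ω : Set (En n)} {u : En n → ℝ}
    (hu : WeakSub A A Ω u)
    {x₀ z : En n} (hx₀ : x₀ ∈ Ω) (hz : x₀ ≠ z) {g g' : ℝ → ℝ} {q : ℝ}
    (hg : ∀ᶠ s in nhds (‖x₀ - z‖ ^ 2), HasDerivAt g (g' s) s)
    (hg' : HasDerivAt g' q (‖x₀ - z‖ ^ 2))
    (hmax : IsLocalMaxOn (fun x => u x - g (‖x - z‖ ^ 2)) Ω x₀) :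
    0 ≤ g' (‖x₀ - z‖ ^ 2) + q * ‖x₀ - z‖ ^ 2 := by
  have key : 0 ≤ A * (2 * g' (‖x₀ - z‖ ^ 2) + 4 * q * ‖x₀ - z‖ ^ 2) +
      A * (2 * g' (‖x₀ - z‖ ^ 2)) := by
    rcases lt_or_ge q 0 with hq | hq
    · exact weakSub_concave hu hx₀ hz hq hg hg' hmax
    · apply le_of_small (k := A * (4 * ‖x₀ - z‖ ^ 2)) one_pos
      intro η h0 _
      obtain ⟨w, hw, hvw⟩ := exists_perp hn (x₀ - z)
      have := weakSub_radial hu hx₀ h0 hg hg' hmax (2 * g' (‖x₀ - z‖ ^ 2))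
        (2 * g' (‖x₀ - z‖ ^ 2) + 4 * (q + η) * ‖x₀ - z‖ ^ 2) w hw ?_ ?_
      · linarith
      · intro y
        have h1 : (inner ℝ (x₀ - z) y) ^ 2 ≤ ‖x₀ - z‖ ^ 2 * ‖y‖ ^ 2 := by
          rw [← mul_pow]
          exact sq_le_sq' (by linarith [neg_abs_le (inner ℝ (x₀ - z) y), abs_real_inner_le_norm (x₀ - z) y])
            (real_inner_le_norm _ _)
        have h2 := mul_le_mul_of_nonneg_left h1 (show 0 ≤ q + η by linarith)
        linarith
      · rw [hvw]; simp
  have : 0 ≤ A * (g' (‖x₀ - z‖ ^ 2) + q * ‖x₀ - z‖ ^ 2) := by linarith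
  exact nonneg_of_mul_nonneg_right this hA

lemma usc_exists_max {n : ℕ} {u h : En n → ℝ} {K : Set (En n)} (hK : IsCompact K)
    (hne : K.Nonempty) (hu : UpperSemicontinuousOn u K) (hh : ContinuousOn h K) :
    ∃ x ∈ K, ∀ y ∈ K, u y - h y ≤ u x - h x := by
  have h1 : UpperSemicontinuousOn (fun x => u x + (- h x)) K :=
    hu.add hh.neg.upperSemicontinuousOn
  obtain ⟨x, hx, hm⟩ := h1.exists_isMaxOn hne hK
  exact ⟨x, hx, fun y hy => by have := hm hy; simp only [mem_ofPred_eq] at this; linarith⟩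

theorem liouville_strict {n : ℕ} {A B : ℝ} (hB : 0 ≤ B) (hAB : B < A) {u : En n → ℝ}
    (husc : UpperSemicontinuous u) (hu : WeakSub A B univ u) {M : ℝ} (hM : ∀ x, u x ≤ M) :
    ∃ k, ∀ x, u x = k := by
  have hA : 0 < A := by linarith
  set c : ℝ := (A - B) / (4 * A) with hc
  have hcA : c * (4 * A) = A - B := by rw [hc]; field_simp
  have hc0 : 0 < c := div_pos (by linarith) (by linarith)
  have hc1 : c < 1 := by rw [hc, div_lt_one (by linarith)]; linarith
  have key : ∀ x y, u x ≤ u y := by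
    intro x y
    have step : ∀ ε, 0 < ε → u x ≤ u y + ε * (‖x - y‖ ^ 2) ^ c := by
      intro ε hε
      by_contra! hcon
      have hcont : Continuous (fun w : En n => ε * (‖w - y‖ ^ 2) ^ c) := by
        have : Continuous (fun w : En n => ‖w - y‖ ^ 2) := by fun_prop
        exact continuous_const.mul (this.rpow_const fun _ => Or.inr hc0.le)
      set T : ℝ := (M - u y) / ε with hT
      have hT0 : 0 ≤ T := div_nonneg (by linarith [hM y]) hε.le
      set R : ℝ := T ^ (1 / (2 * c)) with hR
      have hR0 : 0 ≤ R := Real.rpow_nonneg hT0 _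
      have hRT : (R ^ 2) ^ c = T := by
        rw [hR, ← Real.rpow_natCast, ← Real.rpow_mul hT0, ← Real.rpow_mul hT0]
        have : 1 / (2 * c) * ((2 : ℕ) : ℝ) * c = 1 := by push_cast; field_simp
        rw [this, Real.rpow_one]
      have hout : ∀ w : En n, R ≤ ‖w - y‖ → u w - ε * (‖w - y‖ ^ 2) ^ c ≤ u y := by
        intro w hw
        have h1 : T ≤ (‖w - y‖ ^ 2) ^ c := by
          rw [← hRT]
          exact Real.rpow_le_rpow (by positivity) (by gcongr) hc0.le
        have h2 : ε * T = M - u y := by rw [hT]; field_simp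
        have h3 := mul_le_mul_of_nonneg_left h1 hε.le
        linarith [hM w]
      obtain ⟨x₁, hx₁, hmax⟩ := usc_exists_max (isCompact_closedBall y R)
        ⟨y, mem_closedBall_self hR0⟩ (husc.upperSemicontinuousOn _) hcont.continuousOn
      have hglob : ∀ w, u w - ε * (‖w - y‖ ^ 2) ^ c ≤ u x₁ - ε * (‖x₁ - y‖ ^ 2) ^ c := by
        intro w
        rcases le_total R ‖w - y‖ with h | h
        · have h1 := hmax y (mem_closedBall_self hR0)
          simp [Real.zero_rpow hc0.ne'] at h1
          linarith [hout w h]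
        · exact hmax w (by rwa [mem_closedBall, dist_eq_norm])
      have hne : x₁ ≠ y := by
        rintro rfl
        have := hglob x
        simp [Real.zero_rpow hc0.ne'] at this
        linarith
      have hpos : 0 < ‖x₁ - y‖ ^ 2 := by
        have := norm_pos_iff.mpr (sub_ne_zero.mpr hne)
        positivity
      set s := ‖x₁ - y‖ ^ 2 with hs
      have h1 := weakSub_concave hu (mem_univ x₁) hne (z := y) (g := fun s => ε * s ^ c)
        (g' := fun s => ε * (c * s ^ (c - 1))) (q := ε * (c * ((c - 1) * s ^ (c - 1 - 1)))) ?_ ?_ ?_ ?_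
      · rw [← hs] at h1
        have e : s ^ (c - 1 - 1) * s = s ^ (c - 1) := by
          rw [Real.rpow_sub_one hpos.ne' (c - 1)]; field_simp
        have hP : 0 < ε * (c * s ^ (c - 1)) := by positivity
        have : A * (2 * (ε * (c * s ^ (c - 1))) +
            4 * (ε * (c * ((c - 1) * s ^ (c - 1 - 1)))) * s) + B * (2 * (ε * (c * s ^ (c - 1))))
            = (ε * (c * s ^ (c - 1))) * (B - A) := by
          have : 4 * (ε * (c * ((c - 1) * s ^ (c - 1 - 1)))) * s =
            4 * (ε * (c * s ^ (c - 1))) * (c - 1) := by rw [← e]; ring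
          rw [this]
          linear_combination (ε * (c * s ^ (c - 1))) * hcA
        rw [this] at h1
        nlinarith
      · have : 0 < s ^ (c - 1 - 1) := Real.rpow_pos_of_pos hpos _
        have h2 : 0 < ε * (c * ((1 - c) * s ^ (c - 1 - 1))) := by
          have : 0 < 1 - c := by linarith
          positivity
        linarith
      · filter_upwards [lt_mem_nhds hpos] with t ht
        exact (Real.hasDerivAt_rpow_const (Or.inl ht.ne')).const_mul ε
      · exact ((Real.hasDerivAt_rpow_const (Or.inl hpos.ne')).const_mul c).const_mul ε
      · exact Filter.Eventually.of_forall hglob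
    have hl : Tendsto (fun ε : ℝ => u y + ε * (‖x - y‖ ^ 2) ^ c) (nhdsWithin 0 (Ioi 0))
        (nhds (u y + 0 * (‖x - y‖ ^ 2) ^ c)) :=
      (Continuous.tendsto (by fun_prop) 0).mono_left nhdsWithin_le_nhds
    rw [zero_mul, add_zero] at hl
    exact ge_of_tendsto hl (by filter_upwards [self_mem_nhdsWithin] with ε hε using step ε hε)
  exact ⟨u 0, fun x => le_antisymm (key _ _) (key _ _)⟩

/-- The annulus `exp (-N) ≤ |x|² ≤ exp N`. -/
def annulus (n : ℕ) (N : ℝ) : Set (En n) := {x | ‖x‖ ^ 2 ∈ Icc (Real.exp (-N)) (Real.exp N)}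

lemma annulus_compact (n : ℕ) (N : ℝ) : IsCompact (annulus n N) := by
  apply Metric.isCompact_of_isClosed_isBounded
  · exact isClosed_Icc.preimage (by fun_prop : Continuous fun x : En n => ‖x‖ ^ 2)
  · refine (Metric.isBounded_closedBall (x := (0 : En n)) (r := Real.sqrt (Real.exp N))).subset ?_
    intro x hx
    rw [mem_closedBall_zero_iff]
    exact Real.le_sqrt_of_sq_le hx.2

lemma mem_annulus {n : ℕ} {N : ℝ} {x : En n} (hx : x ≠ 0) :
    x ∈ annulus n N ↔ |Real.log (‖x‖ ^ 2)| ≤ N := by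
  have : 0 < ‖x‖ ^ 2 := by have := norm_pos_iff.mpr hx; positivity
  rw [abs_le, annulus, mem_ofPred_eq, mem_Icc, Real.le_log_iff_exp_le this, Real.log_le_iff_le_exp this]

lemma ne_zero_of_mem_annulus {n : ℕ} {N : ℝ} {x : En n} (hx : x ∈ annulus n N) : x ≠ 0 := by
  rintro rfl
  have := hx.1
  simp at this
  linarith [Real.exp_pos (-N)]

lemma exists_max_punctured {n : ℕ} (hn : 2 ≤ n) {A : ℝ} (hA : 0 < A) {u : En n → ℝ}
    (husc : UpperSemicontinuousOn u {(0 : En n)}ᶜ) (hu : WeakSub A A {(0 : En n)}ᶜ u) {M : ℝ}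
    (hM : ∀ x, x ≠ 0 → u x ≤ M) : ∃ k, k ≠ 0 ∧ ∀ x, x ≠ 0 → u x ≤ u k := by
  have hsub : ∀ N, annulus n N ⊆ {(0 : En n)}ᶜ := fun N x hx => ne_zero_of_mem_annulus hx
  obtain ⟨e, he, -⟩ := exists_perp hn 0
  have he0 : e ≠ 0 := by rintro rfl; simp at he
  have heA : ∀ N, 0 ≤ N → e ∈ annulus n N := fun N hN => by
    rw [mem_annulus he0, he]; simpa
  obtain ⟨k, hk, hkmax⟩ := usc_exists_max (h := fun _ => 0) (annulus_compact n 2)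
    ⟨e, heA 2 (by norm_num)⟩ (husc.mono (hsub 2)) continuousOn_const
  refine ⟨k, ne_zero_of_mem_annulus hk, fun x hx => ?_⟩
  set h : En n → ℝ := fun w => Real.log (2 + (Real.log (‖w‖ ^ 2)) ^ 2) with hh
  have hh0 : ∀ w, 0 ≤ h w := fun w => Real.log_nonneg (by nlinarith [sq_nonneg (Real.log (‖w‖ ^ 2))])
  have hhc : ContinuousOn h {(0 : En n)}ᶜ := by
    have h1 : ContinuousOn (fun w : En n => Real.log (‖w‖ ^ 2)) {(0 : En n)}ᶜ :=
      ContinuousOn.log (by fun_prop) (fun w hw => by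
        have := norm_pos_iff.mpr hw; positivity)
    refine ContinuousOn.log (continuousOn_const.add (h1.pow 2)) (fun w _ => by positivity)
  have step : ∀ ε, 0 < ε → u x ≤ u k + ε * h x := by
    intro ε hε
    set T : ℝ := (M - (u e - ε * h e)) / ε with hT
    set N : ℝ := Real.exp T + 1 with hN
    have hN1 : 1 ≤ N := by linarith [Real.exp_pos T]
    have hout : ∀ w, w ≠ 0 → w ∉ annulus n N → u w - ε * h w ≤ u e - ε * h e := by
      intro w hw hwN
      rw [mem_annulus hw, not_le] at hwN
      have h1 : Real.exp T ≤ 2 + (Real.log (‖w‖ ^ 2)) ^ 2 := by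
        rw [← sq_abs]; nlinarith
      have h2 : T ≤ h w := (Real.le_log_iff_exp_le (by positivity)).mpr h1
      have h3 := mul_le_mul_of_nonneg_left h2 hε.le
      have h4 : ε * T = M - (u e - ε * h e) := by rw [hT]; field_simp
      linarith [hM w hw]
    obtain ⟨x₁, hx₁, hmax⟩ := usc_exists_max (h := fun w => ε * h w) (annulus_compact n N)
      ⟨e, heA N (by linarith)⟩ (husc.mono (hsub N)) (continuousOn_const.mul (hhc.mono (hsub N)))
    have hx₁0 := ne_zero_of_mem_annulus hx₁
    have hglob : ∀ w, w ≠ 0 → u w - ε * h w ≤ u x₁ - ε * h x₁ := by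
      intro w hw
      by_cases hwN : w ∈ annulus n N
      · exact hmax w hwN
      · exact (hout w hw hwN).trans (hmax e (heA N (by linarith)))
    have hpos : 0 < ‖x₁‖ ^ 2 := by have := norm_pos_iff.mpr hx₁0; positivity
    set s := ‖x₁‖ ^ 2 with hs
    have hs' : ‖x₁ - 0‖ ^ 2 = s := by rw [sub_zero]
    set L := Real.log s with hL
    have hL2 : L ^ 2 ≤ 2 := by
      have hD : 0 < 2 + L ^ 2 := by positivity
      have h1 := weakSub_log hn hA hu (z := 0) hx₁0 hx₁0
        (g := fun s => ε * Real.log (2 + (Real.log s) ^ 2))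
        (g' := fun s => ε * (2 * Real.log s / s / (2 + (Real.log s) ^ 2)))
        (q := ε * (((2 * (1 / s) * s - 2 * L) / s ^ 2 * (2 + L ^ 2) - 2 * L / s * (2 * L * (1 / s))) /
          (2 + L ^ 2) ^ 2)) ?_ ?_ ?_
      · rw [hs'] at h1
        have : ε * (2 * L / s / (2 + L ^ 2)) + ε * (((2 * (1 / s) * s - 2 * L) / s ^ 2 * (2 + L ^ 2)
            - 2 * L / s * (2 * L * (1 / s))) / (2 + L ^ 2) ^ 2) * s =
            ε * (4 - 2 * L ^ 2) / (s * (2 + L ^ 2) ^ 2) := by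
          field_simp
          ring
        rw [this] at h1
        have h5 : 0 < s * (2 + L ^ 2) ^ 2 := by positivity
        have h6 := mul_nonneg h1 h5.le
        rw [div_mul_cancel₀ _ h5.ne'] at h6
        have h7 := nonneg_of_mul_nonneg_right h6 hε
        linarith
      · rw [hs']
        filter_upwards [lt_mem_nhds hpos] with t ht
        have h0 := Real.hasDerivAt_log ht.ne'
        have h2 := (((h0.fun_pow 2).const_add 2).log (by positivity)).const_mul ε
        refine HasDerivAt.congr_deriv (f := fun s => ε * Real.log (2 + (Real.log s) ^ 2)) h2 ?_
        simp only [Nat.cast_ofNat, Nat.add_one_sub_one, pow_one]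
        field_simp
      · rw [hs']
        have h0 := Real.hasDerivAt_log hpos.ne'
        have h2 := ((h0.const_mul 2).fun_div (hasDerivAt_id s) hpos.ne').fun_div
          ((h0.fun_pow 2).const_add 2) (by positivity)
        refine HasDerivAt.congr_deriv
          (f := fun s => ε * (2 * Real.log s / s / (2 + (Real.log s) ^ 2))) (h2.const_mul ε) ?_
        simp [← hL]
      · unfold IsLocalMaxOn IsMaxFilter
        filter_upwards [self_mem_nhdsWithin] with w hw
        simpa [hh] using hglob w hw
    have hx₁A : x₁ ∈ annulus n 2 := by
      rw [mem_annulus hx₁0]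
      exact abs_le_of_sq_le_sq (by rw [← hs, ← hL]; linarith) (by norm_num)
    have h1 := hkmax x₁ hx₁A
    have h2 := hglob x hx
    have h3 := mul_nonneg hε.le (hh0 x₁)
    linarith
  have hl : Tendsto (fun ε : ℝ => u k + ε * h x) (nhdsWithin 0 (Ioi 0))
      (nhds (u k + 0 * h x)) :=
    (Continuous.tendsto (by fun_prop) 0).mono_left nhdsWithin_le_nhds
  rw [zero_mul, add_zero] at hl
  exact ge_of_tendsto hl (by filter_upwards [self_mem_nhdsWithin] with ε hε using step ε hε)

lemma strong_max {n : ℕ} (hn : 2 ≤ n) {A : ℝ} (hA : 0 < A) {u : En n → ℝ}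
    (husc : UpperSemicontinuousOn u {(0 : En n)}ᶜ) (hu : WeakSub A A {(0 : En n)}ᶜ u)
    {k z : En n} (hk : ∀ x, x ≠ 0 → u x ≤ u k) (hz : z ≠ 0) (hkz : ‖k - z‖ < ‖z‖) :
    u z = u k := by
  by_contra hne
  have hlt : u z < u k := lt_of_le_of_ne (hk z hz) hne
  obtain ⟨m, hm1, hm2⟩ := exists_between hlt
  obtain ⟨R, hR1, hR2⟩ := exists_between hkz
  have hR0 : 0 < R := (norm_nonneg _).trans_lt hR1
  have hball : closedBall z R ⊆ {(0 : En n)}ᶜ := by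
    rintro x hx rfl
    rw [mem_closedBall, dist_eq_norm, zero_sub, norm_neg] at hx
    linarith
  have hev : ∀ᶠ x in nhds z, u x < m := by
    have := husc z hz m hm1
    rwa [IsOpen.nhdsWithin_eq isOpen_compl_singleton hz] at this
  obtain ⟨r, hr, hrm⟩ := Metric.eventually_nhds_iff.mp hev
  -- choose the exponent
  set α : ℝ := 2 / r ^ 2 with hα
  have hα0 : 0 < α := by positivity
  set ε : ℝ := u k - m with hε
  have hε0 : 0 < ε := by linarith
  obtain ⟨x₁, hx₁, hmax⟩ := usc_exists_max (h := fun w => -(ε * Real.exp (-(α * ‖w - z‖ ^ 2))))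
    (isCompact_closedBall z R) ⟨z, mem_closedBall_self hR0.le⟩ (husc.mono hball)
    (by fun_prop)
  have hkball : k ∈ closedBall z R := by rw [mem_closedBall, dist_eq_norm]; exact hR1.le
  have hFk := hmax k hkball
  have hx₁0 : x₁ ≠ 0 := hball hx₁
  have hxr : r ≤ ‖x₁ - z‖ := by
    by_contra! hc
    have h1 := hrm (show dist x₁ z < r by rwa [dist_eq_norm])
    have h2 : Real.exp (-(α * ‖x₁ - z‖ ^ 2)) ≤ 1 :=
      Real.exp_le_one_iff.mpr (by have : 0 ≤ α * ‖x₁ - z‖ ^ 2 := by positivity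
                                  linarith)
    have h3 := mul_pos hε0 (Real.exp_pos (-(α * ‖k - z‖ ^ 2)))
    nlinarith
  have hxR : ‖x₁ - z‖ < R := by
    refine lt_of_le_of_ne (by simpa [mem_closedBall, dist_eq_norm] using hx₁) fun hc => ?_
    have h1 : Real.exp (-(α * ‖x₁ - z‖ ^ 2)) < Real.exp (-(α * ‖k - z‖ ^ 2)) := by
      rw [Real.exp_lt_exp, hc]
      have : ‖k - z‖ ^ 2 < R ^ 2 := by gcongr
      nlinarith
    have h2 := mul_lt_mul_of_pos_left h1 hε0
    linarith [hk x₁ hx₁0]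
  have hne' : x₁ ≠ z := by
    rintro rfl
    simp at hxr
    linarith
  have h1 := weakSub_log hn hA hu (z := z) (x₀ := x₁) hx₁0 hne'
    (g := fun s => -(ε * Real.exp (-(α * s))))
    (g' := fun s => ε * α * Real.exp (-(α * s)))
    (q := -(ε * α * α * Real.exp (-(α * ‖x₁ - z‖ ^ 2)))) ?_ ?_ ?_
  · have h2 : ε * α * Real.exp (-(α * ‖x₁ - z‖ ^ 2)) +
        -(ε * α * α * Real.exp (-(α * ‖x₁ - z‖ ^ 2))) * ‖x₁ - z‖ ^ 2 =
        (ε * α * Real.exp (-(α * ‖x₁ - z‖ ^ 2))) * (1 - α * ‖x₁ - z‖ ^ 2) := by ring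
    rw [h2] at h1
    have h3 := nonneg_of_mul_nonneg_right h1 (by positivity)
    have h4 : α * r ^ 2 = 2 := by rw [hα]; field_simp
    have h5 : α * r ^ 2 ≤ α * ‖x₁ - z‖ ^ 2 := by gcongr
    linarith
  · refine Filter.Eventually.of_forall fun t => ?_
    have := ((((hasDerivAt_id t).const_mul α).neg.exp).const_mul ε).neg
    refine HasDerivAt.congr_deriv (f := fun s => -(ε * Real.exp (-(α * s)))) this ?_
    simp
    ring
  · have := ((((hasDerivAt_id (‖x₁ - z‖ ^ 2)).const_mul α).neg.exp).const_mul (ε * α))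
    refine HasDerivAt.congr_deriv (f := fun s => ε * α * Real.exp (-(α * s))) this ?_
    simp
    ring
  · refine IsLocalMax.on ?_ _
    have : ball z R ∈ nhds x₁ := isOpen_ball.mem_nhds (by rwa [mem_ball, dist_eq_norm])
    unfold IsLocalMax IsMaxFilter
    filter_upwards [this] with w hw
    exact hmax w (ball_subset_closedBall hw)

theorem liouville_punctured {n : ℕ} (hn : 2 ≤ n) {A : ℝ} (hA : 0 < A) {u : En n → ℝ}
    (husc : UpperSemicontinuousOn u {(0 : En n)}ᶜ) (hu : WeakSub A A {(0 : En n)}ᶜ u)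
    (hM : ∃ M, ∀ x, x ≠ 0 → u x ≤ M) : ∃ c, ∀ x, x ≠ 0 → u x = c := by
  obtain ⟨M, hM⟩ := hM
  obtain ⟨k, hk0, hk⟩ := exists_max_punctured hn hA husc hu hM
  refine ⟨u k, fun x hx => ?_⟩
  by_contra hne
  have hconn : IsPreconnected ({(0 : En n)}ᶜ : Set (En n)) := by
    refine (isConnected_compl_singleton_of_one_lt_rank ?_ 0).isPreconnected
    rw [← Module.finrank_eq_rank, finrank_euclideanSpace, Fintype.card_fin]
    exact_mod_cast hn
  have hU : IsOpen {y : En n | y ≠ 0 ∧ u y = u k} := by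
    rw [isOpen_iff_mem_nhds]
    rintro y ⟨hy0, hy⟩
    have hy' : ∀ x, x ≠ 0 → u x ≤ u y := fun x hx => hy ▸ hk x hx
    have h1 : ∀ᶠ w in nhds y, ‖y - w‖ < ‖w‖ := by
      have : IsOpen {w : En n | ‖y - w‖ < ‖w‖} := isOpen_lt (by fun_prop) (by fun_prop)
      exact this.mem_nhds (by simpa using hy0)
    filter_upwards [h1, isOpen_compl_singleton.mem_nhds (show y ∈ ({0}ᶜ : Set (En n)) from hy0)]
      with w hw hw0
    exact ⟨hw0, (strong_max hn hA husc hu hy' hw0 hw).trans hy⟩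
  have hV : IsOpen {y : En n | y ≠ 0 ∧ u y < u k} := by
    rw [isOpen_iff_mem_nhds]
    rintro y ⟨hy0, hy⟩
    have := husc y hy0 _ hy
    rw [IsOpen.nhdsWithin_eq isOpen_compl_singleton hy0] at this
    filter_upwards [this, isOpen_compl_singleton.mem_nhds (show y ∈ ({0}ᶜ : Set (En n)) from hy0)]
      with w hw hw0
    exact ⟨hw0, hw⟩
  obtain ⟨y, -, ⟨-, h1⟩, ⟨-, h2⟩⟩ := hconn _ _ hU hV
    (fun y hy => (hk y hy).eq_or_lt.imp (fun h => ⟨hy, h⟩) (fun h => ⟨hy, h⟩))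
    ⟨k, hk0, hk0, rfl⟩ ⟨x, hx, hx, lt_of_le_of_ne (hk x hx) hne⟩
  exact h2.ne h1

lemma weights_aux {n : ℕ} {a : Fin n → ℝ} (ha : ClassAbar a) (k : Fin n)
    (h : hatA a k = a k) : 2 ≤ n ∧ 0 < a k := by
  obtain ⟨h0, i, hi⟩ := ha
  have hsum : 0 < ∑ i, a i := Finset.sum_pos' (fun i _ => h0 i) ⟨i, Finset.mem_univ i, hi⟩
  unfold hatA at h
  have hk : 0 < a k := by linarith
  refine ⟨?_, hk⟩
  by_contra! hn
  have hn1 : n = 1 := by have := k.2; omega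
  subst hn1
  have : k = 0 := Subsingleton.elim _ _
  subst this
  simp at h
  linarith

lemma hatA_nonneg {n : ℕ} {a : Fin n → ℝ} (ha : ∀ i, 0 ≤ a i) (k : Fin n) : 0 ≤ hatA a k := by
  unfold hatA
  have := Finset.single_le_sum (fun i _ => ha i) (Finset.mem_univ k)
  linarith

/-- **Unilateral Liouville property (Theorem 7.2).** Let `M_a ∈ 𝒜̄` and
`â_j = (a₁+⋯+aₙ) − a_j`. (i) If `a₁ = â₁`, any usc viscosity subsolution of
`M_a(D²u) = 0` in `ℝⁿ∖{0}` that is bounded above is constant. (ii) If `a₁ > â₁`, any usc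
viscosity subsolution in all of `ℝⁿ` that is bounded above is constant. (iii)–(iv) Dual
statements for supersolutions bounded below, with `aₙ` and `âₙ`. -/
theorem unilateral_liouville (n : ℕ) [NeZero n] (a : Fin n → ℝ) (ha : ClassAbar a) :
    (hatA a 0 = a 0 →
      ∀ u : En n → ℝ, UpperSemicontinuousOn u {(0 : En n)}ᶜ →
        IsViscSubsol a {(0 : En n)}ᶜ (fun _ => 0) u →
        (∃ M, ∀ x : En n, x ≠ 0 → u x ≤ M) →
        ∃ k : ℝ, ∀ x : En n, x ≠ 0 → u x = k) ∧
    (hatA a 0 < a 0 →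
      ∀ u : En n → ℝ, UpperSemicontinuous u →
        IsViscSubsol a Set.univ (fun _ => 0) u →
        (∃ M, ∀ x, u x ≤ M) →
        ∃ k : ℝ, ∀ x, u x = k) ∧
    (hatA a (lastIdx n) = a (lastIdx n) →
      ∀ v : En n → ℝ, LowerSemicontinuousOn v {(0 : En n)}ᶜ →
        IsViscSupersol a {(0 : En n)}ᶜ (fun _ => 0) v →
        (∃ M, ∀ x : En n, x ≠ 0 → M ≤ v x) →
        ∃ k : ℝ, ∀ x : En n, x ≠ 0 → v x = k) ∧
    (hatA a (lastIdx n) < a (lastIdx n) →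
      ∀ v : En n → ℝ, LowerSemicontinuous v →
        IsViscSupersol a Set.univ (fun _ => 0) v →
        (∃ M, ∀ x, M ≤ v x) →
        ∃ k : ℝ, ∀ x, v x = k) := by
  refine ⟨fun h u husc hu hM => ?_, fun h u husc hu hM => ?_, fun h v hlsc hv hM => ?_,
    fun h v hlsc hv hM => ?_⟩
  · obtain ⟨hn, hA⟩ := weights_aux ha 0 h
    have hw := weakSub_of_sub ha.1 hu
    rw [h] at hw
    exact liouville_punctured hn hA husc hw hM
  · obtain ⟨M, hM⟩ := hM
    exact liouville_strict (hatA_nonneg ha.1 0) h husc (weakSub_of_sub ha.1 hu) hM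
  · obtain ⟨hn, hA⟩ := weights_aux ha (lastIdx n) h
    have hw := weakSub_of_super ha.1 hv
    rw [h] at hw
    obtain ⟨M, hM⟩ := hM
    have husc : UpperSemicontinuousOn (fun x => - v x) {(0 : En n)}ᶜ := by
      intro x hx y hy
      have := hlsc x hx (-y) (by linarith)
      filter_upwards [this] with w hw
      linarith
    obtain ⟨c, hc⟩ := liouville_punctured hn hA husc hw
      ⟨-M, fun x hx => by linarith [hM x hx]⟩
    exact ⟨-c, fun x hx => by linarith [hc x hx]⟩
  · obtain ⟨M, hM⟩ := hM
    have husc : UpperSemicontinuous (fun x => - v x) := by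
      intro x y hy
      have := hlsc x (-y) (by linarith)
      filter_upwards [this] with w hw
      linarith
    obtain ⟨c, hc⟩ := liouville_strict (hatA_nonneg ha.1 (lastIdx n)) h husc
      (weakSub_of_super ha.1 hv) (M := -M) (fun x => by linarith [hM x])
    exact ⟨-c, fun x => by linarith [hc x]⟩
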